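/- Let A₁, …, Aₙ be n × n complex Hermitian positive semidefinite matrices and 2 ≤ m ≤ n. Then D(A₁, …, A_m, A_{m+1}, …, Aₙ)^m ≥ ∏_{i=1}^m D(Aᵢ[m], A_{m+1}, …, Aₙ), where Aᵢ[m] denotes m repeated copies of Aᵢ. -/

import Mathlib

open scoped ComplexOrder

/-- The mixed discriminant of `n` complex `n × n` matrices. -/
noncomputable def mixedDisc {n : ℕ} (A : Fin n → Matrix (Fin n) (Fin n) ℂ) : ℂ :=
  (n.factorial : ℂ)⁻¹ * ∑ σ : Equiv.Perm (Fin n), (Matrix.of fun i j => A (σ j) i j).det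

theorem mixedDisc_comp_perm {n : ℕ} (A : Fin n → Matrix (Fin n) (Fin n) ℂ)
    (τ : Equiv.Perm (Fin n)) : mixedDisc (A ∘ τ) = mixedDisc A := by
  unfold mixedDisc
  congr 1
  exact Fintype.sum_equiv (Equiv.mulLeft τ) _ _ fun σ => rfl

theorem mixedDisc_const {n : ℕ} (X : Matrix (Fin n) (Fin n) ℂ) :
    mixedDisc (fun _ => X) = X.det := by
  have h : (n.factorial : ℂ) ≠ 0 := by exact_mod_cast n.factorial_ne_zero
  have hX : (Matrix.of fun i j => X i j) = X := rfl
  simp only [mixedDisc, hX, Finset.sum_const, Finset.card_univ, Fintype.card_perm,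
    Fintype.card_fin, nsmul_eq_mul]
  field_simp

theorem conj_mixedDisc {n : ℕ} (A : Fin n → Matrix (Fin n) (Fin n) ℂ)
    (hA : ∀ i, (A i).IsHermitian) : (starRingEnd ℂ) (mixedDisc A) = mixedDisc A := by
  have hconj (i j k) : (starRingEnd ℂ) (A i j k) = A i k j := (hA i).apply k j
  simp only [mixedDisc, map_mul, map_inv₀, map_natCast, map_sum, Matrix.det_apply',
    map_prod, map_intCast, Matrix.of_apply, hconj]
  congr 1
  refine Finset.sum_comm.trans (Eq.trans ?_ Finset.sum_comm)
  refine Fintype.sum_equiv (Equiv.inv _) _ _ fun τ => ?_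
  refine Fintype.sum_equiv (Equiv.mulRight τ⁻¹) _ _ fun σ => ?_
  simp only [Equiv.inv_apply, Equiv.coe_mulRight, Equiv.Perm.sign_inv]
  congr 1
  exact Fintype.prod_equiv τ _ _ fun j => by simp

theorem continuous_mixedDisc {n : ℕ} :
    Continuous (mixedDisc : (Fin n → Matrix (Fin n) (Fin n) ℂ) → ℂ) := by
  unfold mixedDisc
  refine continuous_const.mul (continuous_finsetSum _ fun σ _ => Continuous.matrix_det ?_)
  refine continuous_matrix fun i j => ?_
  simp only [Matrix.of_apply]
  fun_prop

theorem mixedDisc_det_update {n : ℕ} (A : Fin n → Matrix (Fin n) (Fin n) ℂ) (k : Fin n)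
    (X : Matrix (Fin n) (Fin n) ℂ) (σ : Equiv.Perm (Fin n)) :
    (Matrix.of fun i j => Function.update A k X (σ j) i j) =
      (Matrix.of fun i j => A (σ j) i j).updateCol (σ.symm k) fun i => X i (σ.symm k) := by
  ext i j
  by_cases h : j = σ.symm k
  · subst h
    simp
  · have h' : σ j ≠ k := fun e => h (by simp [← e])
    simp [h, h']

/-- The mixed discriminant as a multilinear map. -/
noncomputable def mixedDiscMultilinear (n : ℕ) :
    MultilinearMap ℂ (fun _ : Fin n => Matrix (Fin n) (Fin n) ℂ) ℂ where
  toFun := mixedDisc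
  map_update_add' := by
    intro inst A k X Y
    rw [Subsingleton.elim inst (instDecidableEqFin n)]
    simp only [mixedDisc, mixedDisc_det_update]
    rw [← mul_add, ← Finset.sum_add_distrib]
    simp only [← Matrix.det_updateCol_add]
    rfl
  map_update_smul' := by
    intro inst A k c X
    rw [Subsingleton.elim inst (instDecidableEqFin n)]
    simp only [mixedDisc, mixedDisc_det_update, smul_eq_mul]
    rw [mul_left_comm c]
    congr 1
    rw [Finset.mul_sum]
    simp only [← Matrix.det_updateCol_smul]
    rfl

/-- The matrices whose quadratic form takes nonzero vectors to the open upper half plane. -/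
def UpperHalf {n : ℕ} (Z : Matrix (Fin n) (Fin n) ℂ) : Prop :=
  ∀ v : Fin n → ℂ, v ≠ 0 → 0 < (star v ⬝ᵥ Z.mulVec v).im

theorem UpperHalf.det_ne_zero {n : ℕ} {Z : Matrix (Fin n) (Fin n) ℂ} (hZ : UpperHalf Z) :
    Z.det ≠ 0 := by
  intro h
  obtain ⟨v, hv, hv0⟩ := Matrix.exists_mulVec_eq_zero_iff.mpr h
  simpa [hv0] using hZ v hv

theorem UpperHalf.add_smul {n : ℕ} {Z B : Matrix (Fin n) (Fin n) ℂ} (hZ : UpperHalf Z)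
    (hB : B.PosDef) {s : ℂ} (hs : 0 ≤ s.im) : UpperHalf (s • B + Z) := by
  intro v hv
  obtain ⟨hre, him⟩ := Complex.pos_iff.mp (hB.dotProduct_mulVec_pos hv)
  have := hZ v hv
  simp only [Matrix.add_mulVec, Matrix.smul_mulVec, dotProduct_add, dotProduct_smul,
    smul_eq_mul, Complex.add_im, Complex.mul_im, ← him]
  nlinarith [mul_nonneg hs hre.le]

theorem Matrix.IsHermitian.upperHalf_smul_add {n : ℕ} {X B : Matrix (Fin n) (Fin n) ℂ}
    (hX : X.IsHermitian) (hB : B.PosDef) {s : ℂ} (hs : 0 < s.im) : UpperHalf (s • B + X) := by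
  intro v hv
  obtain ⟨hre, him⟩ := Complex.pos_iff.mp (hB.dotProduct_mulVec_pos hv)
  have hX0 : (star v ⬝ᵥ X.mulVec v).im = 0 := hX.im_star_dotProduct_mulVec_self v
  simp only [Matrix.add_mulVec, Matrix.smul_mulVec, dotProduct_add, dotProduct_smul,
    smul_eq_mul, Complex.add_im, Complex.mul_im, ← him, hX0]
  simp only [mul_zero, zero_add, add_zero]
  positivity

theorem Matrix.PosDef.upperHalf_I_smul {n : ℕ} {B : Matrix (Fin n) (Fin n) ℂ}
    (hB : B.PosDef) : UpperHalf (Complex.I • B) := by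
  simpa using Matrix.isHermitian_zero.upperHalf_smul_add hB (s := Complex.I) (by simp)

open Polynomial in
theorem Polynomial.eval_derivative_ne_zero_of_im_nonneg {P : ℂ[X]} (hdeg : 0 < P.degree)
    (hP : ∀ s : ℂ, 0 ≤ s.im → P.eval s ≠ 0) : P.derivative.eval 0 ≠ 0 := by
  intro h
  have hne : P.derivative ≠ 0 := by
    intro h0
    have := Polynomial.derivative_eq_zero.mp h0
    rw [← Polynomial.natDegree_pos_iff_degree_pos] at hdeg
    omega
  have h0 : (0 : ℂ) ∈ P.derivative.rootSet ℂ := by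
    rw [Polynomial.mem_rootSet]
    exact ⟨hne, by simpa using h⟩
  have hsub : P.rootSet ℂ ⊆ {z : ℂ | z.im < 0} := by
    intro z hz
    rw [Polynomial.mem_rootSet] at hz
    by_contra hz'
    exact hP z (not_lt.mp hz') (by simpa using hz.2)
  have := convexHull_min hsub (convex_halfSpace_im_lt 0)
    (Polynomial.rootSet_derivative_subset_convexHull_rootSet hdeg h0)
  simp at this

theorem mixedDisc_piecewise_smul {n : ℕ} (C : Fin n → Matrix (Fin n) (Fin n) ℂ)
    (B : Matrix (Fin n) (Fin n) ℂ) (W : Finset (Fin n)) (s : ℂ) :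
    mixedDisc (W.piecewise (fun _ => s • B) C) =
      s ^ W.card * mixedDisc (W.piecewise (fun _ => B) C) := by
  have h := (mixedDiscMultilinear n).map_piecewise_smul (fun _ => s)
    (W.piecewise (fun _ => B) C) W
  have e : W.piecewise (fun _ => s • B) C =
      W.piecewise (fun i => s • W.piecewise (fun _ => B) C i) (W.piecewise (fun _ => B) C) := by
    ext1 i
    by_cases hi : i ∈ W <;> simp [hi]
  rw [e]
  refine h.trans ?_
  rw [Finset.prod_const, smul_eq_mul]
  rfl

theorem mixedDisc_piecewise_smul_add {n : ℕ} (C : Fin n → Matrix (Fin n) (Fin n) ℂ)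
    (B Z : Matrix (Fin n) (Fin n) ℂ) (W : Finset (Fin n)) (s : ℂ) :
    mixedDisc (W.piecewise (fun _ => s • B + Z) C) =
      ∑ T ∈ W.powerset, mixedDisc (T.piecewise (fun _ => B) (W.piecewise (fun _ => Z) C)) *
        s ^ T.card := by
  have h := (mixedDiscMultilinear n).map_piecewise_add (fun _ => s • B)
    (W.piecewise (fun _ => Z) C) W
  have e : W.piecewise (fun _ => s • B + Z) C =
      W.piecewise ((fun _ => s • B) + W.piecewise (fun _ => Z) C)
        (W.piecewise (fun _ => Z) C) := by
    ext1 i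
    by_cases hi : i ∈ W <;> simp [hi]
  rw [e]
  refine h.trans (Finset.sum_congr rfl fun T _ => ?_)
  exact (mixedDisc_piecewise_smul _ B T s).trans (mul_comm _ _)

theorem mixedDisc_singleton_piecewise_insert {n : ℕ} (C : Fin n → Matrix (Fin n) (Fin n) ℂ)
    (Z : Matrix (Fin n) (Fin n) ℂ) {S : Finset (Fin n)} {a j : Fin n} (ha : a ∉ S)
    (hj : j ∈ insert a S) :
    mixedDisc (({j} : Finset (Fin n)).piecewise (fun _ => C a)
      ((insert a S).piecewise (fun _ => Z) C)) = mixedDisc (S.piecewise (fun _ => Z) C) := by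
  rw [← mixedDisc_comp_perm (S.piecewise (fun _ => Z) C) (Equiv.swap a j)]
  refine congrArg mixedDisc (funext fun i => ?_)
  rcases eq_or_ne i j with rfl | hij
  · simp [ha]
  · rcases eq_or_ne i a with rfl | hia
    · have hjS : j ∈ S := by simpa [hij.symm] using hj
      simp [hij, hjS]
    · simp [hij, hia, Equiv.swap_apply_of_ne_of_ne, Finset.piecewise]

theorem mixedDisc_piecewise_ne_zero_of_insert {n : ℕ} {C : Fin n → Matrix (Fin n) (Fin n) ℂ}
    (hC : ∀ i, (C i).PosDef) {S : Finset (Fin n)} {a : Fin n} (ha : a ∉ S)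
    (ih : ∀ Z, UpperHalf Z → mixedDisc ((insert a S).piecewise (fun _ => Z) C) ≠ 0)
    {Z : Matrix (Fin n) (Fin n) ℂ} (hZ : UpperHalf Z) :
    mixedDisc (S.piecewise (fun _ => Z) C) ≠ 0 := by
  set W := insert a S with hW
  set c : Finset (Fin n) → ℂ := fun T =>
    mixedDisc (T.piecewise (fun _ => C a) (W.piecewise (fun _ => Z) C)) with hc
  set P : Polynomial ℂ :=
    ∑ T ∈ W.powerset, Polynomial.C (c T) * Polynomial.X ^ T.card with hP
  have heval (s : ℂ) :
      P.eval s = mixedDisc (W.piecewise (fun _ => s • C a + Z) C) := by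
    rw [mixedDisc_piecewise_smul_add, hP, Polynomial.eval_finsetSum]
    simp [hc]
  have hcoeff (k : ℕ) : P.coeff k = ∑ T ∈ W.powerset, if k = T.card then c T else 0 := by
    simp only [hP, Polynomial.finsetSum_coeff, Polynomial.coeff_C_mul_X_pow]
  have hcW : c W ≠ 0 := by
    have h5 : W.piecewise (fun _ => C a) (W.piecewise (fun _ => Z) C) =
        W.piecewise (fun _ => C a) C := by
      ext1 i
      by_cases hi : i ∈ W <;> simp [hi]
    have h4 := ih _ (hC a).upperHalf_I_smul
    rw [mixedDisc_piecewise_smul] at h4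
    simpa only [hc, h5] using right_ne_zero_of_mul h4
  have hdeg : 0 < P.degree := by
    have h1 : P.coeff W.card = c W := by
      rw [hcoeff, Finset.sum_eq_single W]
      · simp
      · intro T hT hTW
        rw [if_neg]
        intro h
        exact hTW (Finset.eq_of_subset_of_card_le (Finset.mem_powerset.mp hT) h.le)
      · simp
    have h2 : P.coeff W.card ≠ 0 := h1 ▸ hcW
    have h3 : 0 < W.card := Finset.card_pos.mpr ⟨a, by simp [hW]⟩
    rw [← Polynomial.natDegree_pos_iff_degree_pos]
    exact h3.trans_le (Polynomial.le_natDegree_of_ne_zero h2)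
  have hroot := Polynomial.eval_derivative_ne_zero_of_im_nonneg hdeg fun s hs => by
    rw [heval]
    exact ih _ (hZ.add_smul (hC a) hs)
  rw [← Polynomial.coeff_zero_eq_eval_zero, Polynomial.coeff_derivative, hcoeff] at hroot
  intro h0
  refine hroot ?_
  rw [Finset.sum_eq_zero, zero_mul]
  intro T hT
  split_ifs with h1
  · obtain ⟨j, rfl⟩ := Finset.card_eq_one.mp h1.symm
    have hj : j ∈ W := by simpa using hT
    exact (mixedDisc_singleton_piecewise_insert C Z ha hj).trans h0
  · rfl

theorem mixedDisc_piecewise_ne_zero {n : ℕ} {C : Fin n → Matrix (Fin n) (Fin n) ℂ}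
    (hC : ∀ i, (C i).PosDef) (S : Finset (Fin n)) :
    ∀ {Z : Matrix (Fin n) (Fin n) ℂ}, UpperHalf Z →
      mixedDisc (S.piecewise (fun _ => Z) C) ≠ 0 := by
  suffices h : ∀ T : Finset (Fin n), ∀ Z, UpperHalf Z →
      mixedDisc (Tᶜ.piecewise (fun _ => Z) C) ≠ 0 by
    intro Z hZ
    have := h Sᶜ Z hZ
    rwa [compl_compl] at this
  intro T
  induction T using Finset.induction_on with
  | empty =>
    intro Z hZ
    rw [Finset.compl_empty, Finset.piecewise_univ, mixedDisc_const]
    exact hZ.det_ne_zero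
  | insert a T ha ih =>
    intro Z hZ
    refine mixedDisc_piecewise_ne_zero_of_insert hC (a := a) (by simp) (fun Z hZ => ?_) hZ
    have : insert a (insert a T)ᶜ = Tᶜ := by
      ext i
      by_cases hi : i = a <;> simp [hi, ha]
    rw [this]
    exact ih Z hZ

theorem mixedDisc_re_pos {n : ℕ} {C : Fin n → Matrix (Fin n) (Fin n) ℂ}
    (hC : ∀ i, (C i).PosDef) : 0 < (mixedDisc C).re := by
  have hne {C : Fin n → Matrix (Fin n) (Fin n) ℂ} (hC : ∀ i, (C i).PosDef) :
      (mixedDisc C).re ≠ 0 := by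
    have h : mixedDisc C ≠ 0 := by
      simpa using mixedDisc_piecewise_ne_zero hC ∅
        (Matrix.PosDef.one (n := Fin n) (R := ℂ)).upperHalf_I_smul
    intro h0
    exact h (Complex.ext h0 (Complex.conj_eq_iff_im.mp
      (conj_mixedDisc C fun i => (hC i).isHermitian)))
  by_contra! hneg
  set f : ℝ → ℝ := fun t =>
    (mixedDisc fun i => ((1 - t : ℝ) : ℂ) • (1 : Matrix (Fin n) (Fin n) ℂ) + (t : ℂ) • C i).re
  have hf : Continuous f := by
    refine Complex.continuous_re.comp (continuous_mixedDisc.comp ?_)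
    fun_prop
  have h0 : f 0 = 1 := by simp [f, mixedDisc_const]
  have h1 : f 1 ≤ 0 := by simpa [f] using hneg
  obtain ⟨t, ⟨ht0, ht1⟩, ht⟩ := intermediate_value_Icc' zero_le_one hf.continuousOn
    (show (0 : ℝ) ∈ Set.Icc (f 1) (f 0) from ⟨h1, by simp [h0]⟩)
  refine hne (fun i => ?_) ht
  rcases ht0.eq_or_lt with rfl | ht0
  · simpa using Matrix.PosDef.one
  · refine Matrix.PosDef.posSemidef_add (Matrix.PosSemidef.one.smul ?_) ((hC i).smul ?_)
    · exact_mod_cast sub_nonneg.mpr ht1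
    · exact_mod_cast ht0

theorem posDef_update {n : ℕ} {C : Fin n → Matrix (Fin n) (Fin n) ℂ}
    (hC : ∀ i, (C i).PosDef) {X : Matrix (Fin n) (Fin n) ℂ} (hX : X.PosDef) (a i : Fin n) :
    (Function.update C a X i).PosDef := by
  rcases eq_or_ne i a with rfl | h <;> simp [*]

theorem posDef_piecewise {n : ℕ} {C : Fin n → Matrix (Fin n) (Fin n) ℂ}
    (hC : ∀ i, (C i).PosDef) {X : Matrix (Fin n) (Fin n) ℂ} (hX : X.PosDef)
    (W : Finset (Fin n)) (i : Fin n) : (W.piecewise (fun _ => X) C i).PosDef := by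
  by_cases h : i ∈ W <;> simp [*]

theorem mul_le_sq_of_quadratic_ne_zero {p b q : ℝ} (hp : 0 < p)
    (h : ∀ z : ℂ, 0 < z.im → (p : ℂ) * z ^ 2 + 2 * b * z + q ≠ 0) : q * p ≤ b ^ 2 := by
  by_contra! hlt
  have hs : 0 < q * p - b ^ 2 := sub_pos.mpr hlt
  have hsq : ((√(q * p - b ^ 2) : ℝ) : ℂ) ^ 2 = q * p - b ^ 2 := by
    rw [← Complex.ofReal_pow, Real.sq_sqrt hs.le]
    push_cast
    ring
  have hpc : (p : ℂ) ≠ 0 := by exact_mod_cast hp.ne'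
  set r := √(q * p - b ^ 2) with hr
  have hrpos : 0 < r := Real.sqrt_pos.mpr hs
  refine h ((((-b / p : ℝ) : ℂ)) + ((r / p : ℝ) : ℂ) * Complex.I) ?_ ?_
  · simp only [Complex.add_im, Complex.ofReal_im, Complex.im_ofReal_mul,
      Complex.I_im]
    rw [zero_add, mul_one]
    positivity
  · push_cast
    field_simp
    linear_combination hsq * (Complex.I ^ 2) + (q * p - b ^ 2 : ℂ) * Complex.I_sq

/-- Alexandrov's inequality for mixed discriminants of positive definite matrices. -/
theorem mixedDisc_update_mul_le_sq {n : ℕ} {C : Fin n → Matrix (Fin n) (Fin n) ℂ}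
    (hC : ∀ i, (C i).PosDef) {a b : Fin n} (hab : a ≠ b) :
    (mixedDisc (Function.update C a (C b))).re * (mixedDisc (Function.update C b (C a))).re ≤
      (mixedDisc C).re ^ 2 := by
  have hre {E : Fin n → Matrix (Fin n) (Fin n) ℂ} (hE : ∀ i, (E i).PosDef) :
      (((mixedDisc E).re : ℝ) : ℂ) = mixedDisc E :=
    Complex.conj_eq_iff_re.mp (conj_mixedDisc E fun i => (hE i).isHermitian)
  refine mul_le_sq_of_quadratic_ne_zero
    (mixedDisc_re_pos (posDef_update hC (hC a) b)) fun z hz h0 => ?_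
  rw [hre (posDef_update hC (hC a) b), hre (posDef_update hC (hC b) a), hre hC] at h0
  have hne := mixedDisc_piecewise_ne_zero hC (insert a {b})
    ((hC b).isHermitian.upperHalf_smul_add (hC a) hz)
  have hp : ({b} : Finset (Fin n)).powerset = {∅, {b}} := by
    ext t
    simp [Finset.subset_singleton_iff]
  rw [mixedDisc_piecewise_smul_add, Finset.sum_powerset_insert (by simpa using hab),
    hp, Finset.sum_pair (by simp), Finset.sum_pair (by simp)] at hne
  have hS : ({b} : Finset (Fin n)).piecewise (fun _ => C b) C = C := by
    rw [Finset.piecewise_singleton, Function.update_eq_self]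
  have hb := mixedDisc_singleton_piecewise_insert C (C b) (S := {b}) (a := a) (j := b)
    (by simpa using hab) (by simp)
  have ha := mixedDisc_singleton_piecewise_insert C (C b) (S := {b}) (a := a) (j := a)
    (by simpa using hab) (by simp)
  have h1 : (insert a {b} : Finset (Fin n)).piecewise (fun _ => C b) C =
      Function.update C a (C b) := by
    rw [Finset.piecewise_insert, hS]
  have h2 : (insert a {b} : Finset (Fin n)).piecewise (fun _ => C a)
      (Function.update C a (C b)) = Function.update C b (C a) := by
    ext1 i
    by_cases hi : i = a
    · subst hi
      simp [hab]
    · by_cases hi' : i = b <;> simp [hi, hi', hab.symm, Finset.piecewise]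
  refine hne ?_
  rw [hS] at ha hb
  rw [insert_empty_eq, ha, hb, h1, h2, Finset.piecewise_empty, Finset.card_empty,
    Finset.card_singleton, Finset.card_singleton, Finset.card_pair hab, ← h0]
  ring

theorem pow_mul_le_pow_of_mul_le_sq {u v w z : ℝ} (hu : 0 < u) (hv : 0 < v) (hw : 0 < w)
    {k : ℕ} (h₁ : w * v ≤ u ^ 2) (h₂ : u ^ k * z ≤ w ^ (k + 1)) :
    v ^ (k + 1) * z ≤ u ^ (k + 2) := by
  have huk : 0 < u ^ k := pow_pos hu k
  refine le_of_mul_le_mul_left ?_ huk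
  calc u ^ k * (v ^ (k + 1) * z) = v ^ (k + 1) * (u ^ k * z) := by ring
    _ ≤ v ^ (k + 1) * w ^ (k + 1) := by gcongr
    _ = (w * v) ^ (k + 1) := by ring
    _ ≤ (u ^ 2) ^ (k + 1) := by gcongr
    _ = u ^ k * u ^ (k + 2) := by ring

theorem mixedDisc_piecewise_pow_mul_le {n : ℕ} {X Y : Matrix (Fin n) (Fin n) ℂ}
    (hX : X.PosDef) (hY : Y.PosDef) (W : Finset (Fin n)) :
    ∀ {C : Fin n → Matrix (Fin n) (Fin n) ℂ}, (∀ i, (C i).PosDef) → ∀ {a : Fin n}, a ∉ W →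
      (mixedDisc ((insert a W).piecewise (fun _ => X) C)).re ^ W.card *
        (mixedDisc ((insert a W).piecewise (fun _ => Y) C)).re ≤
      (mixedDisc (W.piecewise (fun _ => X) (Function.update C a Y))).re ^ (W.card + 1) := by
  induction W using Finset.induction_on with
  | empty =>
    intro C hC a _
    simp only [Finset.piecewise_insert, Finset.piecewise_empty]
    simp
  | insert b W hb ih =>
    intro C hC a ha
    have hab : a ≠ b := fun h => ha (by simp [h])
    have haW : a ∉ W := fun h => ha (by simp [h])
    rw [Finset.card_insert_of_notMem hb]
    have hE := posDef_piecewise (posDef_update hC hY a) hX (insert b W)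
    set E := (insert b W).piecewise (fun _ => X) (Function.update C a Y) with hEdef
    have hIH := ih (posDef_update hC hY b) haW
    have hAF := mixedDisc_update_mul_le_sq hE hab.symm
    have hEa : E a = Y := by simp [hEdef, hab, haW]
    have hEb : E b = X := by simp [hEdef]
    rw [hEa, hEb] at hAF
    have hv : Function.update E a X =
        (insert a (insert b W)).piecewise (fun _ => X) C := by
      ext1 i
      by_cases hia : i = a <;> simp [hia, hEdef, Finset.piecewise]
    have hw : Function.update E b Y =
        W.piecewise (fun _ => X) (Function.update (Function.update C b Y) a Y) := by
      ext1 i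
      by_cases hib : i = b
      · subst hib
        simp [hb, hab.symm]
      · by_cases hia : i = a <;> simp [hib, hia, hab, hEdef, Finset.piecewise]
    have hz : (insert a W).piecewise (fun _ => Y) (Function.update C b Y) =
        (insert a (insert b W)).piecewise (fun _ => Y) C := by
      ext1 i
      by_cases hib : i = b
      · subst hib
        simp [Finset.piecewise]
      · by_cases hia : i = a <;> simp [hib, hia, Finset.piecewise]
    have hu : mixedDisc ((insert a W).piecewise (fun _ => X) (Function.update C b Y)) =
        mixedDisc E := by
      rw [← mixedDisc_comp_perm E (Equiv.swap a b)]
      refine congrArg mixedDisc (funext fun i => ?_)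
      rcases eq_or_ne i a with rfl | hia
      · simp [hEb]
      · rcases eq_or_ne i b with rfl | hib
        · simp [hEa, hia, hb]
        · simp [hEdef, hia, hib, Equiv.swap_apply_of_ne_of_ne, Finset.piecewise]
    rw [hw, hv] at hAF
    rw [hu, hz] at hIH
    refine pow_mul_le_pow_of_mul_le_sq (mixedDisc_re_pos hE) ?_ ?_ hAF hIH
    · exact mixedDisc_re_pos (posDef_piecewise hC hX _)
    · exact mixedDisc_re_pos
        (posDef_piecewise (posDef_update (posDef_update hC hY b) hY a) hX _)

theorem prod_mixedDisc_piecewise_le_pow {n : ℕ} {A : Fin n → Matrix (Fin n) (Fin n) ℂ}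
    (hA : ∀ i, (A i).PosDef) (W : Finset (Fin n)) :
    ∏ i ∈ W, (mixedDisc (W.piecewise (fun _ => A i) A)).re ≤ (mixedDisc A).re ^ W.card := by
  induction W using Finset.induction_on with
  | empty => simp
  | insert a W ha ih =>
    have hpos (V : Finset (Fin n)) (i : Fin n) :
        0 < (mixedDisc (V.piecewise (fun _ => A i) A)).re :=
      mixedDisc_re_pos (posDef_piecewise hA (hA i) V)
    rcases W.eq_empty_or_nonempty with rfl | hW
    · simp only [Finset.piecewise_insert, Finset.piecewise_empty]
      simp
    rw [Finset.prod_insert ha, Finset.card_insert_of_notMem ha]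
    refine le_of_pow_le_pow_left₀ hW.card_pos.ne'
      (pow_nonneg (mixedDisc_re_pos hA).le _) ?_
    calc _ = ∏ i ∈ W, ((mixedDisc ((insert a W).piecewise (fun _ => A i) A)).re ^ W.card *
            (mixedDisc ((insert a W).piecewise (fun _ => A a) A)).re) := by
          rw [Finset.prod_mul_distrib, Finset.prod_pow, Finset.prod_const, mul_pow, mul_comm]
      _ ≤ ∏ i ∈ W, (mixedDisc (W.piecewise (fun _ => A i) A)).re ^ (W.card + 1) := by
          refine Finset.prod_le_prod
            (fun i _ => mul_nonneg (pow_nonneg (hpos _ i).le _) (hpos _ a).le) fun i _ => ?_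
          simpa using mixedDisc_piecewise_pow_mul_le (hA i) (hA a) W hA ha
      _ ≤ ((mixedDisc A).re ^ W.card) ^ (W.card + 1) := by
          rw [Finset.prod_pow]
          exact pow_le_pow_left₀ (Finset.prod_nonneg fun i _ => (hpos W i).le) ih _
      _ = _ := by rw [← pow_mul, ← pow_mul, mul_comm]

theorem prod_mixedDisc_piecewise_le_pow_of_posSemidef {n : ℕ}
    {A : Fin n → Matrix (Fin n) (Fin n) ℂ} (hA : ∀ i, (A i).PosSemidef)
    (W : Finset (Fin n)) :
    ∏ i ∈ W, (mixedDisc (W.piecewise (fun _ => A i) A)).re ≤ (mixedDisc A).re ^ W.card := by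
  set B : ℝ → Fin n → Matrix (Fin n) (Fin n) ℂ := fun ε i => A i + (ε : ℂ) • 1 with hB
  have hBc : Continuous B := by fun_prop
  have hBi (i : Fin n) : Continuous fun ε => W.piecewise (fun _ => B ε i) (B ε) := by
    refine continuous_pi fun j => ?_
    by_cases hj : j ∈ W <;> simp only [hj, Finset.piecewise, if_true, if_false] <;> fun_prop
  have hl : Continuous fun ε => ∏ i ∈ W, (mixedDisc (W.piecewise (fun _ => B ε i) (B ε))).re :=
    continuous_finsetProd _ fun i _ =>
      Complex.continuous_re.comp (continuous_mixedDisc.comp (hBi i))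
  have hr : Continuous fun ε => (mixedDisc (B ε)).re ^ W.card :=
    (Complex.continuous_re.comp (continuous_mixedDisc.comp hBc)).pow _
  have hB0 : B 0 = A := by simp [hB]
  have h := le_of_tendsto_of_tendsto (b := nhdsWithin (0 : ℝ) (Set.Ioi 0))
    (hl.tendsto 0 |>.mono_left nhdsWithin_le_nhds)
    (hr.tendsto 0 |>.mono_left nhdsWithin_le_nhds) ?_
  · simpa only [hB0] using h
  · filter_upwards [self_mem_nhdsWithin] with ε hε
    refine prod_mixedDisc_piecewise_le_pow (fun i => ?_) W
    exact Matrix.PosDef.posSemidef_add (hA i)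
      (Matrix.PosDef.one.smul (by exact_mod_cast (Set.mem_Ioi.mp hε)))

/-- for positive semidefinite Hermitian `A₁,…,Aₙ` and `2 ≤ m ≤ n`,
`D(A₁,…,Aₙ)^m ≥ ∏_{i=1}^m D(Aᵢ[m], A_{m+1},…,Aₙ)`. -/
theorem af_mixedDisc_higher (n m : ℕ) (hm : 2 ≤ m) (hmn : m ≤ n)
    (A : Fin n → Matrix (Fin n) (Fin n) ℂ) (hA : ∀ i, (A i).PosSemidef) :
    (mixedDisc A).re ^ m ≥
      ∏ i : Fin m, (mixedDisc fun k : Fin n =>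
        if (k : ℕ) < m then A (Fin.castLE hmn i) else A k).re := by
  have h := prod_mixedDisc_piecewise_le_pow_of_posSemidef hA
    (Finset.univ.map (Fin.castLEEmb hmn))
  rw [Finset.prod_map, Finset.card_map, Finset.card_univ, Fintype.card_fin] at h
  refine le_of_eq_of_le (Finset.prod_congr rfl fun i _ => ?_) h
  refine congrArg (fun E => (mixedDisc E).re) (funext fun k => ?_)
  have hk : k ∈ Finset.univ.map (Fin.castLEEmb hmn) ↔ (k : ℕ) < m := by
    simp only [Finset.mem_map, Finset.mem_univ, true_and, Fin.castLEEmb_apply]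
    exact ⟨fun ⟨j, hj⟩ => hj ▸ j.isLt, fun hk => ⟨⟨k, hk⟩, rfl⟩⟩
  simp only [Finset.piecewise, hk, Fin.castLEEmb_apply]
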